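/- arXiv:1103.1174 — 5 statements merged into one kernel-verified Lean document; each statement's English description precedes it below -/
import Mathlib

section
/- Let k be a field, A = k[X₀', X₁', X₀, …, Xₙ], let 𝔭 be an ideal of A, and let φ : A → A be any map. Assume that for every equidimensional ideal J of A all of whose associated primes are contained in 𝔭, at least one of the following two hypotheses holds: (1) for all x ∈ A and all a ∈ J, x·φ(a) lies in the ideal generated by the set φ(x·J) plus J; or (2) for all x ∈ A and all a ∈ J, φ(x)·φ(a) lies in the ideal generated by the set φ(x·J) plus J, and moreover for every associated prime 𝔮 of A/J the set-theoretic preimage φ⁻¹(𝔮) is a prime ideal of A with height φ⁻¹(𝔮) = height 𝔮. Then φ is correct with respect to 𝔭, i.e. for every ideal I of A all of whose associated primes are contained in 𝔭, the inclusion φ(I) ⊆ eq(I) implies φ(eq(I)) ⊆ eq(I). -/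
open scoped Classical

noncomputable section

/-- The height (rank) of an ideal: the minimum of the heights of the primes containing it. -/
noncomputable def idealHeight {R : Type*} [CommRing R] (I : Ideal R) : ℕ∞ :=
  ⨅ (p : PrimeSpectrum R) (_ : I ≤ p.asIdeal), Order.height p

/-- The contraction `I·A_𝔭 ∩ A` of an ideal `I` through the localization at a prime `𝔭`. -/
noncomputable def locContract {R : Type*} [CommRing R] (p : Ideal R) [p.IsPrime]
    (I : Ideal R) : Ideal R :=
  (I.map (algebraMap R (Localization.AtPrime p))).comap (algebraMap R (Localization.AtPrime p))

/-- `eq(I)`: the equidimensional part of minimal rank of `I`, i.e. the intersection of the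
contractions `I·A_𝔮 ∩ A` over the minimal primes `𝔮` of `I` of minimal height. -/
noncomputable def eqPart {R : Type*} [CommRing R] (I : Ideal R) : Ideal R :=
  ⨅ (p : PrimeSpectrum R) (_ : p.asIdeal ∈ I.minimalPrimes)
    (_ : idealHeight p.asIdeal = idealHeight I), locContract p.asIdeal I

/-- An ideal is equidimensional if all associated primes of `R ⧸ J` have height `height J`. -/
def IsEquidimensional {R : Type*} [CommRing R] (J : Ideal R) : Prop :=
  ∀ q ∈ associatedPrimes R (R ⧸ J), idealHeight q = idealHeight J

/-- The length of a module, as the longest chain of submodules. -/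
noncomputable def moduleLength (R M : Type*) [Ring R] [AddCommGroup M] [Module R M] : ℕ∞ :=
  Order.height (⊤ : Submodule R M)

/-- `m(I)`: the number of primary components of minimal height of `I`, counted with their
length as multiplicity: the sum over primes `𝔮` with `height 𝔮 = height I` of the length of
the `A_𝔮`-module `(A/I)_𝔮`. -/
noncomputable def mIdeal {R : Type*} [CommRing R] (I : Ideal R) : ℕ∞ :=
  ∑' p : PrimeSpectrum R,
    if idealHeight p.asIdeal = idealHeight I then
      moduleLength (Localization.AtPrime p.asIdeal)
        (LocalizedModule p.asIdeal.primeCompl (R ⧸ I))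
    else 0

section EquidimensionalPart

variable {R : Type*} [CommRing R]

lemma idealHeight_mono {I J : Ideal R} (h : I ≤ J) : idealHeight I ≤ idealHeight J :=
  le_iInf₂ fun p hp => iInf₂_le p (h.trans hp)

lemma idealHeight_eq_height (p : Ideal R) [hp : p.IsPrime] : idealHeight p = p.height := by
  refine le_antisymm ?_ (le_iInf₂ fun q hq => ?_)
  · rw [PrimeSpectrum.height_eq_orderHeight ⟨p, hp⟩]
    exact iInf₂_le (⟨p, hp⟩ : PrimeSpectrum R) le_rfl
  · rw [← PrimeSpectrum.height_eq_orderHeight]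
    exact Ideal.height_mono hq

lemma mem_locContract_iff (p : Ideal R) [p.IsPrime] {I : Ideal R} {a : R} :
    a ∈ locContract p I ↔ ∃ s ∉ p, s * a ∈ I := by
  rw [locContract, Ideal.mem_comap,
    IsLocalization.algebraMap_mem_map_algebraMap_iff p.primeCompl]
  rfl

lemma mem_locContract_of_mul_mem (p : Ideal R) [hp : p.IsPrime] {I : Ideal R} {s a : R}
    (hs : s ∉ p) (h : s * a ∈ locContract p I) : a ∈ locContract p I := by
  obtain ⟨t, ht, hta⟩ := (mem_locContract_iff p).1 h
  exact (mem_locContract_iff p).2 ⟨t * s, hp.mul_notMem ht hs, by rwa [mul_assoc]⟩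

lemma locContract_le (p : Ideal R) [hp : p.IsPrime] {I : Ideal R} (h : I ≤ p) :
    locContract p I ≤ p := fun a ha => by
  obtain ⟨s, hs, hsa⟩ := (mem_locContract_iff p).1 ha
  exact (hp.mem_or_mem (h hsa)).resolve_left hs

/-- The primes defining `eqPart I`. -/
def IsMinimalHeightPrime (I p : Ideal R) : Prop :=
  p ∈ I.minimalPrimes ∧ idealHeight p = idealHeight I

lemma mem_eqPart_iff {I : Ideal R} {a : R} :
    a ∈ eqPart I ↔ ∀ (p : Ideal R) [p.IsPrime], IsMinimalHeightPrime I p →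
      a ∈ locContract p I := by
  simp only [eqPart, Submodule.mem_iInf, IsMinimalHeightPrime]
  exact ⟨fun h p hp hpI => h ⟨p, hp⟩ hpI.1 hpI.2, fun h p h₁ h₂ => h p.asIdeal ⟨h₁, h₂⟩⟩

lemma le_eqPart (I : Ideal R) : I ≤ eqPart I := fun a ha =>
  mem_eqPart_iff.2 fun p hp _ => (mem_locContract_iff p).2
    ⟨1, (Ideal.ne_top_iff_one p).1 hp.ne_top, by simpa using ha⟩

lemma exists_notMem_forall_mul_mem [IsNoetherianRing R] (p : Ideal R) [hp : p.IsPrime]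
    {I J : Ideal R} (h : J ≤ locContract p I) : ∃ s ∉ p, ∀ b ∈ J, s * b ∈ I := by
  induction J, IsNoetherian.noetherian J using Submodule.fg_induction with
  | singleton x =>
    obtain ⟨s, hs, hsx⟩ := (mem_locContract_iff p).1 (h (Submodule.mem_span_singleton_self x))
    refine ⟨s, hs, fun b hb => ?_⟩
    obtain ⟨r, rfl⟩ := Submodule.mem_span_singleton.1 hb
    rw [smul_eq_mul, mul_left_comm]
    exact I.mul_mem_left r hsx
  | sup M₁ M₂ _ _ h₁ h₂ =>
    obtain ⟨s, hs, hsI⟩ := h₁ (le_sup_left.trans h)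
    obtain ⟨t, ht, htI⟩ := h₂ (le_sup_right.trans h)
    refine ⟨s * t, hp.mul_notMem hs ht, fun b hb => ?_⟩
    obtain ⟨c, hc, d, hd, rfl⟩ := Submodule.mem_sup.1 hb
    have hsum : s * t * (c + d) = t * (s * c) + s * (t * d) := by ring
    rw [hsum]
    exact I.add_mem (I.mul_mem_left t (hsI c hc)) (I.mul_mem_left s (htI d hd))

lemma mem_associatedPrimes_quotient_of_mem_minimalPrimes [IsNoetherianRing R] {I p : Ideal R}
    (h : p ∈ I.minimalPrimes) : p ∈ associatedPrimes R (R ⧸ I) :=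
  Module.associatedPrimes.minimalPrimes_annihilator_subset_associatedPrimes R (R ⧸ I)
    (by rwa [Ideal.annihilator_quotient])

lemma IsMinimalHeightPrime.mem_associatedPrimes_eqPart [IsNoetherianRing R] {I p : Ideal R}
    (h : IsMinimalHeightPrime I p) : p ∈ associatedPrimes R (R ⧸ eqPart I) := by
  have hp : p.IsPrime := h.1.1.1
  refine mem_associatedPrimes_quotient_of_mem_minimalPrimes ⟨⟨hp, fun a ha => ?_⟩,
    fun q hq hqp => h.1.2 ⟨hq.1, (le_eqPart I).trans hq.2⟩ hqp⟩
  exact locContract_le p h.1.1.2 (mem_eqPart_iff.1 ha p h)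

lemma isMinimalHeightPrime_of_mem_associatedPrimes_eqPart [IsNoetherianRing R] {I p : Ideal R}
    (h : p ∈ associatedPrimes R (R ⧸ eqPart I)) : IsMinimalHeightPrime I p := by
  obtain ⟨hp, x, hx⟩ := isAssociatedPrime_iff.1 h
  obtain ⟨y, rfl⟩ := Ideal.Quotient.mk_surjective x
  have mem_iff (r : R) : r ∈ p ↔ r * y ∈ eqPart I := by
    rw [hx, Submodule.mem_colon_singleton, Submodule.mem_bot, Algebra.smul_def,
      Ideal.Quotient.algebraMap_eq, ← map_mul, Ideal.Quotient.eq_zero_iff_mem]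
  have hy : y ∉ eqPart I := fun hy =>
    (Ideal.ne_top_iff_one p).1 hp.ne_top ((mem_iff 1).2 (by rwa [one_mul]))
  rw [mem_eqPart_iff] at hy
  push Not at hy
  obtain ⟨q, hq, hqI, hyq⟩ := hy
  have hpq : p ≤ q := fun r hr => by
    by_contra hrq
    exact hyq (mem_locContract_of_mul_mem q hrq (mem_eqPart_iff.1 ((mem_iff r).1 hr) q hqI))
  have hIp : I ≤ p := fun r hr => (mem_iff r).2 (Ideal.mul_mem_right y _ (le_eqPart I hr))
  rwa [hpq.antisymm (hqI.1.2 ⟨hp, hIp⟩ hpq)]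

lemma isEquidimensional_eqPart [IsNoetherianRing R] (I : Ideal R) :
    IsEquidimensional (eqPart I) := fun q hq => by
  have h := isMinimalHeightPrime_of_mem_associatedPrimes_eqPart hq
  refine le_antisymm (h.2.trans_le (idealHeight_mono (le_eqPart I))) (idealHeight_mono ?_)
  have hle := IsAssociatedPrime.annihilator_le hq
  rwa [Submodule.annihilator_top, Ideal.annihilator_quotient] at hle

lemma isMinimalHeightPrime_of_le [IsNoetherianRing R] {I p : Ideal R} [hp : p.IsPrime]
    (hI : I ≤ p) (h : idealHeight p = idealHeight I) : IsMinimalHeightPrime I p := by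
  refine ⟨⟨⟨hp, hI⟩, fun q hq hqp => ?_⟩, h⟩
  have := hq.1
  refine (Ideal.eq_of_le_of_height_le q hqp ?_).ge
  rw [← idealHeight_eq_height, ← idealHeight_eq_height, h]
  exact idealHeight_mono hq.2

/-- The colon ideal `(I : eqPart I)` is contained in no prime of height `idealHeight I`. -/
lemma exists_notMem_forall_mul_eqPart_mem [IsNoetherianRing R] {I p : Ideal R} [p.IsPrime]
    (h : idealHeight p = idealHeight I) : ∃ s ∉ p, ∀ b ∈ eqPart I, s * b ∈ I := by
  by_cases hI : I ≤ p
  · exact exists_notMem_forall_mul_mem p fun a ha =>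
      mem_eqPart_iff.1 ha p (isMinimalHeightPrime_of_le hI h)
  · obtain ⟨s, hs, hsp⟩ := SetLike.not_le_iff_exists.1 hI
    exact ⟨s, hsp, fun b _ => I.mul_mem_right b hs⟩

lemma span_image_mul_sup_le {I J : Ideal R} {φ : R → R} (hφ : ∀ a ∈ I, φ a ∈ J) {s : R}
    (hs : ∀ b ∈ J, s * b ∈ I) :
    Ideal.span (φ '' ((fun b => s * b) '' (J : Set R))) ⊔ J ≤ J := by
  refine sup_le (Ideal.span_le.2 ?_) le_rfl
  rintro _ ⟨_, ⟨b, hb, rfl⟩, rfl⟩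
  exact hφ _ (hs b hb)

end EquidimensionalPart

/-- Lemma `lem_phicorrecte` of the paper: a sufficient criterion for a transformation of the
polynomial ring to be correct with respect to an ideal `𝔭`. -/
theorem correctness_criterion
    {k : Type*} [Field k] (n : ℕ) (𝔭 : Ideal (MvPolynomial (Fin 2 ⊕ Fin (n + 1)) k))
    (φ : MvPolynomial (Fin 2 ⊕ Fin (n + 1)) k → MvPolynomial (Fin 2 ⊕ Fin (n + 1)) k)
    (hyp : ∀ J : Ideal (MvPolynomial (Fin 2 ⊕ Fin (n + 1)) k), IsEquidimensional J →
      (∀ q ∈ associatedPrimes (MvPolynomial (Fin 2 ⊕ Fin (n + 1)) k)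
        (MvPolynomial (Fin 2 ⊕ Fin (n + 1)) k ⧸ J), q ≤ 𝔭) →
      ((∀ x : MvPolynomial (Fin 2 ⊕ Fin (n + 1)) k, ∀ a ∈ J,
          x * φ a ∈ Ideal.span (φ '' ((fun b => x * b) '' (J : Set _))) ⊔ J)
        ∨ ((∀ x : MvPolynomial (Fin 2 ⊕ Fin (n + 1)) k, ∀ a ∈ J,
              φ x * φ a ∈ Ideal.span (φ '' ((fun b => x * b) '' (J : Set _))) ⊔ J)
            ∧ ∀ q ∈ associatedPrimes (MvPolynomial (Fin 2 ⊕ Fin (n + 1)) k)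
                (MvPolynomial (Fin 2 ⊕ Fin (n + 1)) k ⧸ J),
              ∃ Q : Ideal (MvPolynomial (Fin 2 ⊕ Fin (n + 1)) k), Q.IsPrime ∧
                (Q : Set _) = φ ⁻¹' (q : Set _) ∧ idealHeight Q = idealHeight q))) :
    ∀ I : Ideal (MvPolynomial (Fin 2 ⊕ Fin (n + 1)) k),
      (∀ q ∈ associatedPrimes (MvPolynomial (Fin 2 ⊕ Fin (n + 1)) k)
        (MvPolynomial (Fin 2 ⊕ Fin (n + 1)) k ⧸ I), q ≤ 𝔭) →
      (∀ a ∈ I, φ a ∈ eqPart I) → ∀ a ∈ eqPart I, φ a ∈ eqPart I := by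
  intro I hI hφ a ha
  refine mem_eqPart_iff.2 fun q _ hqI => ?_
  have hq := hqI.mem_associatedPrimes_eqPart
  rcases hyp (eqPart I) (isEquidimensional_eqPart I) fun p hp =>
    hI p (mem_associatedPrimes_quotient_of_mem_minimalPrimes
      (isMinimalHeightPrime_of_mem_associatedPrimes_eqPart hp).1) with h | ⟨h, hpre⟩
  · obtain ⟨s, hsq, hs⟩ := exists_notMem_forall_mul_eqPart_mem hqI.2
    exact mem_locContract_of_mul_mem q hsq
      (mem_eqPart_iff.1 (span_image_mul_sup_le hφ hs (h s a ha)) q hqI)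
  · obtain ⟨Q, _, hQ, hQq⟩ := hpre q hq
    obtain ⟨s, hsQ, hs⟩ := exists_notMem_forall_mul_eqPart_mem (hQq.trans hqI.2)
    have hsq : φ s ∉ q := fun hsq => hsQ (hQ.ge hsq)
    exact mem_locContract_of_mul_mem q hsq
      (mem_eqPart_iff.1 (span_image_mul_sup_le hφ hs (h s a ha)) q hqI)
end
end

section
/- Let k be a field, A = k[X₀', X₁', X₀, …, Xₙ], let φ : A → A be a ring homomorphism, and let 𝔭 be a prime ideal of A such that height φ⁻¹(𝔮) = height 𝔮 for every prime ideal 𝔮 ⊆ 𝔭. Then φ is correct with respect to 𝔭: for every ideal I of A all of whose associated primes are contained in 𝔭, the inclusion φ(I) ⊆ eq(I) implies φ(eq(I)) ⊆ eq(I). -/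
open scoped Classical

noncomputable section

section

variable {R : Type*} [CommRing R]

lemma idealHeight_of_isPrime (p : Ideal R) [p.IsPrime] : idealHeight p = p.height := by
  refine Eq.trans ?_ (PrimeSpectrum.height_eq_orderHeight ⟨p, inferInstance⟩).symm
  exact le_antisymm (iInf₂_le (⟨p, inferInstance⟩ : PrimeSpectrum R) le_rfl)
    (le_iInf₂ fun _ hq => Order.height_mono hq)

lemma mem_locContract {p : Ideal R} [p.IsPrime] {I : Ideal R} {a : R} :
    a ∈ locContract p I ↔ ∃ s ∉ p, s * a ∈ I :=
  IsLocalization.algebraMap_mem_map_algebraMap_iff p.primeCompl _ I a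

lemma mem_eqPart {I : Ideal R} {a : R} :
    a ∈ eqPart I ↔ ∀ p : Ideal R, p.IsPrime → p ∈ I.minimalPrimes →
      idealHeight p = idealHeight I → ∃ s ∉ p, s * a ∈ I := by
  simp only [eqPart, Submodule.mem_iInf, mem_locContract]
  exact ⟨fun h p hp => h ⟨p, hp⟩, fun h p => h p.asIdeal p.isPrime⟩

lemma mem_minimalPrimes_of_idealHeight_eq [IsNoetherianRing R] {I p : Ideal R} [p.IsPrime]
    (hIp : I ≤ p) (h : idealHeight p = idealHeight I) : p ∈ I.minimalPrimes := by
  obtain ⟨q, hq, hqp⟩ := Ideal.exists_minimalPrimes_le hIp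
  have := hq.isPrime
  have hle : p.height ≤ q.height := by
    rw [← idealHeight_of_isPrime, ← idealHeight_of_isPrime, h]
    exact idealHeight_mono hq.1.2
  exact Ideal.eq_of_le_of_height_le q hqp hle ▸ hq

lemma minimalPrimes_subset_associatedPrimes_quotient [IsNoetherianRing R] (I : Ideal R) :
    I.minimalPrimes ⊆ associatedPrimes R (R ⧸ I) := by
  simpa only [Ideal.annihilator_quotient] using
    Module.associatedPrimes.minimalPrimes_annihilator_subset_associatedPrimes R (R ⧸ I)

/-- A ring endomorphism of a Noetherian ring whose comap preserves the heights of the minimal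
primes of `I` and that maps `I` into `eqPart I` preserves `eqPart I`. -/
lemma map_mem_eqPart [IsNoetherianRing R] (φ : R →+* R) {I : Ideal R}
    (hht : ∀ q ∈ I.minimalPrimes, idealHeight (q.comap φ) = idealHeight q)
    (hI : ∀ a ∈ I, φ a ∈ eqPart I) {a : R} (ha : a ∈ eqPart I) : φ a ∈ eqPart I := by
  refine mem_eqPart.2 fun q hqp hq hqI => ?_
  have hIq : I ≤ q.comap φ := fun b hb => by
    obtain ⟨s, hs, hsb⟩ := mem_eqPart.1 (hI b hb) q hqp hq hqI
    exact (hqp.mem_or_mem (hq.1.2 hsb)).resolve_left hs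
  have hheight : idealHeight (q.comap φ) = idealHeight I := (hht q hq).trans hqI
  obtain ⟨s, hs, hsa⟩ := mem_eqPart.1 ha (q.comap φ) inferInstance
    (mem_minimalPrimes_of_idealHeight_eq hIq hheight) hheight
  obtain ⟨t, ht, hta⟩ := mem_eqPart.1 (hI _ hsa) q hqp hq hqI
  refine ⟨t * φ s, fun h => (hqp.mem_or_mem h).elim ht hs, ?_⟩
  rwa [mul_assoc, ← map_mul]

end

/-- A ring endomorphism of the polynomial ring preserving heights of primes below `𝔭` is
correct with respect to `𝔭` (Corollary `exemple_ApBirr_Correcte` of the paper). -/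
theorem ring_hom_is_correct
    {k : Type*} [Field k] (n : ℕ)
    (φ : MvPolynomial (Fin 2 ⊕ Fin (n + 1)) k →+* MvPolynomial (Fin 2 ⊕ Fin (n + 1)) k)
    (𝔭 : Ideal (MvPolynomial (Fin 2 ⊕ Fin (n + 1)) k)) (h𝔭 : 𝔭.IsPrime)
    (hht : ∀ q : Ideal (MvPolynomial (Fin 2 ⊕ Fin (n + 1)) k), q.IsPrime → q ≤ 𝔭 →
      idealHeight (q.comap φ) = idealHeight q) :
    ∀ I : Ideal (MvPolynomial (Fin 2 ⊕ Fin (n + 1)) k),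
      (∀ q ∈ associatedPrimes (MvPolynomial (Fin 2 ⊕ Fin (n + 1)) k)
        (MvPolynomial (Fin 2 ⊕ Fin (n + 1)) k ⧸ I), q ≤ 𝔭) →
      (∀ a ∈ I, φ a ∈ eqPart I) → ∀ a ∈ eqPart I, φ a ∈ eqPart I := by
  intro I hass hI a ha
  exact map_mem_eqPart φ (fun q hq => hht q hq.isPrime
    (hass q (minimalPrimes_subset_associatedPrimes_quotient I hq))) hI ha
end
end

section
/- Let k be a field, A = k[X₀', X₁', X₀, …, Xₙ], and let D : A → A be a derivation (an additive map satisfying D(ab) = a·D(b) + D(a)·b). Let J be an ideal with D(J) ⊆ J, and suppose J = 𝔮 ∩ I, where 𝔮 is a primary ideal of A and I is an ideal of A not contained in the radical √𝔮 (this situation occurs for each primary component 𝔮 of an equidimensional D-stable ideal J). Then D(𝔮) ⊆ 𝔮, i.e. the primary component 𝔮 is itself D-stable. -/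
open scoped Classical

/-- Primary components of an equidimensional `D`-stable ideal are `D`-stable, for a
derivation `D` of the polynomial ring (from the proof of Theorem `LMGPD` of the paper):
if `J = 𝔮 ⊓ I` is `D`-stable, `𝔮` is primary and `I ⊄ √𝔮`, then `𝔮` is `D`-stable. -/
theorem primary_component_of_derivation_stable_ideal_is_stable
    {k : Type*} [Field k] (n : ℕ)
    (D : MvPolynomial (Fin 2 ⊕ Fin (n + 1)) k → MvPolynomial (Fin 2 ⊕ Fin (n + 1)) k)
    (hadd : ∀ a b, D (a + b) = D a + D b)
    (hleib : ∀ a b, D (a * b) = a * D b + D a * b)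
    (J q I : Ideal (MvPolynomial (Fin 2 ⊕ Fin (n + 1)) k))
    (hq : q.IsPrimary) (hI : ¬ I ≤ q.radical) (hJ : J = q ⊓ I)
    (hJstable : ∀ a ∈ J, D a ∈ J) :
    ∀ a ∈ q, D a ∈ q := by
  intro a ha
  obtain ⟨b, hbI, hbq⟩ := SetLike.not_le_iff_exists.mp hI
  have hD : a * D b + D a * b ∈ q := by
    rw [← hleib]
    have hab := hJstable (a * b) (hJ ▸ ⟨q.mul_mem_right b ha, I.mul_mem_left a hbI⟩)
    rw [hJ] at hab
    exact hab.1
  have hDab : D a * b ∈ q := (q.add_mem_iff_right (q.mul_mem_right _ ha)).mp hD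
  exact ((Ideal.isPrimary_iff.mp hq).2 hDab).resolve_right hbq
end

section
/- Let k be a field, n ≥ 2, let f₁, …, fₙ ∈ k[[z]] be formal power series, and let a, b be nonnegative integers. Then there exists a nonzero polynomial Q ∈ k[z][X₁, …, Xₙ] with deg_z Q ≤ a and total degree at most b in the variables X₁, …, Xₙ, such that ord_{z=0} Q(z, f₁(z), …, fₙ(z)) ≥ ⌊(a+1)(b+1)ⁿ / n!⌋ (where the order is infinite if the evaluation is the zero power series). -/
open scoped Classical

/-- Siegel-type lemma: if a finite set `S` of monomials has more than `m` elements, some nonzero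
polynomial supported on `S` vanishes to order at least `m` at the given power series. -/
lemma exists_mvPolynomial_support_subset_le_order {k σ : Type*} [Field k]
    (S : Finset (σ →₀ ℕ)) (x : σ → PowerSeries k) {m : ℕ} (hm : m < S.card) :
    ∃ Q : MvPolynomial σ k, Q ≠ 0 ∧ Q.support ⊆ S ∧ (m : ℕ∞) ≤ (MvPolynomial.aeval x Q).order := by
  let P : (S → k) →ₗ[k] MvPolynomial σ k :=
    ∑ d : S, (MvPolynomial.monomial d.1).comp (LinearMap.proj d)
  have hP (c : S → k) : P c = ∑ d : S, MvPolynomial.monomial d.1 (c d) := by simp [P]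
  let L : (S → k) →ₗ[k] (Fin m → k) :=
    LinearMap.pi fun j => (PowerSeries.coeff (j : ℕ)).comp ((MvPolynomial.aeval x).toLinearMap.comp P)
  have hL : LinearMap.ker L ≠ ⊥ := LinearMap.ker_ne_bot_of_finrank_lt (by simpa using hm)
  obtain ⟨c, hc, hc0⟩ := Submodule.exists_mem_ne_zero_of_ne_bot hL
  refine ⟨P c, ?_, ?_, ?_⟩
  · obtain ⟨d, hd⟩ := Function.ne_iff.mp hc0
    intro h
    apply hd
    simpa [hP, MvPolynomial.coeff_sum, MvPolynomial.coeff_monomial, Subtype.coe_inj] using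
      congrArg (MvPolynomial.coeff d.1) h
  · intro d hd
    by_contra hdS
    apply MvPolynomial.mem_support_iff.mp hd
    rw [hP, MvPolynomial.coeff_sum]
    refine Finset.sum_eq_zero fun e _ => ?_
    rw [MvPolynomial.coeff_monomial, if_neg]
    rintro rfl
    exact hdS e.2
  · exact PowerSeries.nat_le_order _ _ fun i hi => congrFun (LinearMap.mem_ker.mp hc) ⟨i, hi⟩

/-- The exponent of `z ^ i * X₁ ^ s₁ * ⋯ * Xₙ ^ sₙ`, where `sⱼ` is the multiplicity of `j` in `s`,
and the multiplicity of `0` is discarded. -/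
noncomputable def boundedExponent {n a b : ℕ} (p : Fin (a + 1) × Sym (Fin (n + 1)) b) :
    Fin (n + 1) →₀ ℕ :=
  Finsupp.cons p.1 (Finsupp.equivFunOnFinite.symm fun j : Fin n => (p.2 : Multiset _).count j.succ)

lemma count_zero_add_sum_count_succ {n b : ℕ} (s : Sym (Fin (n + 1)) b) :
    (s : Multiset _).count (0 : Fin (n + 1)) + ∑ j : Fin n, (s : Multiset _).count j.succ = b := by
  rw [← Fin.sum_univ_succ fun j => (s : Multiset (Fin (n + 1))).count j,
    Multiset.sum_count_eq_card fun _ _ => Finset.mem_univ _]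
  exact s.2

lemma boundedExponent_injective {n a b : ℕ} :
    Function.Injective (boundedExponent (n := n) (a := a) (b := b)) := by
  rintro ⟨i, s⟩ ⟨i', s'⟩ h
  have hsucc (j : Fin n) : (s : Multiset _).count j.succ = (s' : Multiset _).count j.succ := by
    simpa [boundedExponent] using DFunLike.congr_fun h j.succ
  have hzero : (i : ℕ) = i' := by simpa [boundedExponent] using DFunLike.congr_fun h 0
  have hs := count_zero_add_sum_count_succ s
  have hs' := count_zero_add_sum_count_succ s'
  simp only [hsucc] at hs
  refine Prod.ext (Fin.ext hzero) (Sym.ext (Multiset.ext.mpr fun j => ?_))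
  induction j using Fin.cases with
  | zero => dsimp only; omega
  | succ j => exact hsucc j

lemma mul_pow_div_factorial_lt_mul_choose {n : ℕ} (hn : 2 ≤ n) (a b : ℕ) :
    (a + 1) * (b + 1) ^ n / n.factorial < (a + 1) * (n + b).choose b := by
  rw [Nat.div_lt_iff_lt_mul n.factorial_pos, mul_assoc]
  refine Nat.mul_lt_mul_of_pos_left ?_ a.succ_pos
  have h := Nat.pow_lt_ascFactorial b hn
  rw [Nat.ascFactorial_eq_factorial_mul_choose] at h
  rw [← Nat.choose_symm_add, mul_comm, add_comm n b]
  exact h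

/-- Construction of an auxiliary polynomial with large order of vanishing along
`(z, f₁(z), …, fₙ(z))` by linear algebra (inequality `ie_Qab` of the paper).  Variable `0`
of the polynomial ring plays the role of `z`. -/
theorem auxiliary_polynomial_exists
    {k : Type*} [Field k] (n : ℕ) (hn : 2 ≤ n)
    (f : Fin n → PowerSeries k) (a b : ℕ) :
    ∃ Q : MvPolynomial (Fin (n + 1)) k, Q ≠ 0 ∧
      Q.degreeOf 0 ≤ a ∧
      (Q.support.sup fun d => ∑ j : Fin n, d j.succ) ≤ b ∧
      (((a + 1) * (b + 1) ^ n / n.factorial : ℕ) : ℕ∞) ≤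
        (MvPolynomial.aeval (Fin.cons PowerSeries.X f) Q).order := by
  have hcard : (Finset.univ.image (boundedExponent (n := n) (a := a) (b := b))).card =
      (a + 1) * (n + b).choose b := by
    rw [Finset.card_image_of_injective _ boundedExponent_injective, Finset.card_univ,
      Fintype.card_prod, Fintype.card_fin, Sym.card_sym_eq_choose, Fintype.card_fin]
    congr 2
    omega
  obtain ⟨Q, hQ, hsupp, hord⟩ := exists_mvPolynomial_support_subset_le_order _
    (Fin.cons PowerSeries.X f) (hcard ▸ mul_pow_div_factorial_lt_mul_choose hn a b)
  refine ⟨Q, hQ, MvPolynomial.degreeOf_le_iff.mpr fun d hd => ?_, Finset.sup_le fun d hd => ?_,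
    hord⟩
  all_goals
    obtain ⟨⟨i, s⟩, -, rfl⟩ := Finset.mem_image.mp (hsupp hd)
  · simpa [boundedExponent] using Nat.lt_succ_iff.mp i.2
  · have hs := count_zero_add_sum_count_succ s
    simp only [boundedExponent, Finsupp.cons_succ, Finsupp.equivFunOnFinite_symm_apply_apply]
    omega
end

section
/- Let k be a field and A = k[X₀', X₁', X₀, …, Xₙ]. Let I ⊊ J be proper ideals of A with height I = height J, and suppose both I and J are equidimensional (every associated prime of A/I has height equal to height I, and likewise for J). Then m(J) < m(I), where m(I) := Σ over primes 𝔮 with height 𝔮 = height I of the length of the A_𝔮-module (A/I)_𝔮; in particular both m(I) and m(J) are finite natural numbers and m(J) is strictly smaller. -/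
open scoped Classical

noncomputable section

section LocalizedLength

variable {R : Type*} [CommRing R]

theorem idealHeight_eq_height_s12 (I : Ideal R) : idealHeight I = I.height := by
  apply le_antisymm
  · rw [Ideal.height_eq_inf_minimalPrimes]
    refine le_iInf₂ fun q hq => ?_
    have := hq.isPrime
    exact (iInf₂_le (⟨q, this⟩ : PrimeSpectrum R) hq.1.2).trans_eq
      (PrimeSpectrum.height_eq_orderHeight ⟨q, this⟩).symm
  · refine le_iInf₂ fun p hp => ?_
    rw [← PrimeSpectrum.height_eq_orderHeight]
    exact Ideal.height_mono hp

theorem moduleLength_eq_length (M : Type*) [AddCommGroup M] [Module R M] :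
    moduleLength R M = Module.length R M :=
  (Module.length_eq_height R M).symm

/-- The canonical image of `1` generates the localization of `R ⧸ I`. -/
theorem toSpanSingleton_localizedModule_quotient_surjective (S : Submonoid R) (I : Ideal R) :
    Function.Surjective (LinearMap.toSpanSingleton (Localization S) (LocalizedModule S (R ⧸ I))
      (LocalizedModule.mk 1 1)) := by
  intro x
  induction x using LocalizedModule.induction_on with
  | h m s =>
    obtain ⟨r, rfl⟩ := Ideal.Quotient.mk_surjective m
    refine ⟨Localization.mk r s, ?_⟩
    rw [LinearMap.toSpanSingleton_apply, LocalizedModule.mk_smul_mk, mul_one]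
    congr 1
    rw [Algebra.smul_def, mul_one]
    rfl

/-- The localization of `R ⧸ I` at a minimal prime of `I` has finite length. -/
theorem length_localizedModule_quotient_ne_top [IsNoetherianRing R] {I p : Ideal R} [p.IsPrime]
    (hp : p ∈ I.minimalPrimes) :
    Module.length (Localization.AtPrime p) (LocalizedModule p.primeCompl (R ⧸ I)) ≠ ⊤ := by
  set K := I.map (algebraMap R (Localization.AtPrime p)) with hK
  have hmin : IsLocalRing.maximalIdeal (Localization.AtPrime p) ∈ K.minimalPrimes := by
    rw [hK, IsLocalization.minimalPrimes_map p.primeCompl, Set.mem_preimage]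
    simpa [Localization.AtPrime.under_maximalIdeal] using hp
  have hart : IsArtinianRing (Localization.AtPrime p ⧸ K) :=
    IsLocalRing.quotient_artinian_of_mem_minimalPrimes_of_isLocalRing K hmin
  have hquot : Module.length (Localization.AtPrime p) (Localization.AtPrime p ⧸ K) ≠ ⊤ := by
    rw [Module.length_eq_of_surjective (R := Localization.AtPrime p ⧸ K)
      Ideal.Quotient.mk_surjective]
    exact Module.length_ne_top
  let g := LinearMap.toSpanSingleton (Localization.AtPrime p)
    (LocalizedModule p.primeCompl (R ⧸ I)) (LocalizedModule.mk 1 1)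
  have hker : K ≤ LinearMap.ker g := by
    refine Ideal.map_le_iff_le_comap.mpr fun x hx => ?_
    rw [Ideal.mem_comap, LinearMap.mem_ker, LinearMap.toSpanSingleton_apply, algebraMap_smul,
      LocalizedModule.smul'_mk, Algebra.smul_def, mul_one, Ideal.Quotient.algebraMap_eq,
      Ideal.Quotient.eq_zero_iff_mem.mpr hx, LocalizedModule.zero_mk]
  have hsurj : Function.Surjective (Submodule.liftQ K g hker) := by
    rw [← LinearMap.range_eq_top, Submodule.range_liftQ, LinearMap.range_eq_top]
    exact toSpanSingleton_localizedModule_quotient_surjective _ _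
  exact ((Module.length_le_of_surjective _ hsurj).trans_lt hquot.lt_top).ne

/-- Length is additive along the localization of `0 → J/I → R/I → R/J → 0`. -/
theorem length_localizedModule_quotient_eq_add (S : Submonoid R) {I J : Ideal R} (h : I ≤ J) :
    Module.length (Localization S) (LocalizedModule S (R ⧸ I)) =
      Module.length (Localization S)
        (LocalizedModule S (LinearMap.ker (Submodule.factor h))) +
      Module.length (Localization S) (LocalizedModule S (R ⧸ J)) :=
  Module.length_eq_add_of_exact
    (LocalizedModule.map S (LinearMap.ker (Submodule.factor h)).subtype)
    (LocalizedModule.map S (Submodule.factor h))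
    (LocalizedModule.map_injective S _ (Submodule.subtype_injective _))
    (LocalizedModule.map_surjective S _ (Submodule.factor_surjective h))
    (LocalizedModule.map_exact S _ _ (LinearMap.exact_subtype_ker_map _))

/-- The prime spectrum points entering `mIdeal I` with a nonzero term are minimal primes. -/
theorem mem_minimalPrimes_of_length_ne_zero [IsNoetherianRing R] {I : Ideal R}
    {p : PrimeSpectrum R} (hht : idealHeight p.asIdeal = idealHeight I)
    (hlen : Module.length (Localization.AtPrime p.asIdeal)
      (LocalizedModule p.asIdeal.primeCompl (R ⧸ I)) ≠ 0) :
    p.asIdeal ∈ I.minimalPrimes := by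
  have hsupp : p ∈ Module.support R (R ⧸ I) := by
    rwa [Module.mem_support_iff, ← not_subsingleton_iff_nontrivial,
      ← Module.length_eq_zero_iff (R := Localization.AtPrime p.asIdeal)]
  have hle : I ≤ p.asIdeal := by
    simpa [Ideal.annihilator_quotient] using Module.annihilator_le_of_mem_support hsupp
  rw [idealHeight_eq_height_s12, idealHeight_eq_height_s12] at hht
  exact Ideal.mem_minimalPrimes_of_height_le hle hht.le

theorem finite_asIdeal_mem_minimalPrimes [IsNoetherianRing R] (I : Ideal R) :
    {p : PrimeSpectrum R | p.asIdeal ∈ I.minimalPrimes}.Finite :=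
  I.finite_minimalPrimes_of_isNoetherianRing.preimage
    fun _ _ _ _ h => PrimeSpectrum.ext h

end LocalizedLength

/-- Strict decrease of `mIdeal` over any Noetherian ring. Equidimensionality is needed only for
the smaller ideal. -/
theorem mIdeal_lt_mIdeal_and_ne_top {R : Type*} [CommRing R] [IsNoetherianRing R]
    {I J : Ideal R} (hIJ : I < J) (hht : idealHeight I = idealHeight J)
    (heqI : IsEquidimensional I) :
    mIdeal J < mIdeal I ∧ mIdeal I ≠ ⊤ := by
  set s := (finite_asIdeal_mem_minimalPrimes I).toFinset with hs
  let N := LinearMap.ker (Submodule.factor hIJ.le)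
  let c : PrimeSpectrum R → ℕ∞ := fun p =>
    if idealHeight p.asIdeal = idealHeight I then
      Module.length (Localization.AtPrime p.asIdeal) (LocalizedModule p.asIdeal.primeCompl N)
    else 0
  let term : Ideal R → PrimeSpectrum R → ℕ∞ := fun K p =>
    if idealHeight p.asIdeal = idealHeight I then
      Module.length (Localization.AtPrime p.asIdeal)
        (LocalizedModule p.asIdeal.primeCompl (R ⧸ K))
    else 0
  have hadd (p : PrimeSpectrum R) : term I p = c p + term J p := by
    by_cases hp : idealHeight p.asIdeal = idealHeight I
    · simpa only [term, c, if_pos hp] using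
        length_localizedModule_quotient_eq_add p.asIdeal.primeCompl hIJ.le
    · simp only [term, c, if_neg hp, add_zero]
  have hzero (p : PrimeSpectrum R) (hp : p ∉ s) : term I p = 0 := by
    by_contra hne
    simp only [term, ite_eq_right_iff, not_forall] at hne
    obtain ⟨hp', hne⟩ := hne
    exact hp (by simpa [hs] using mem_minimalPrimes_of_length_ne_zero hp' hne)
  have hmI : mIdeal I = ∑ p ∈ s, term I p := by
    simp only [mIdeal, moduleLength_eq_length]
    exact tsum_eq_sum hzero
  have hmJ : mIdeal J = ∑ p ∈ s, term J p := by
    simp only [mIdeal, moduleLength_eq_length, ← hht]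
    exact tsum_eq_sum fun p hp => (add_eq_zero.mp ((hadd p).symm.trans (hzero p hp))).2
  have hfin : mIdeal I ≠ ⊤ := by
    rw [hmI]
    refine ENat.sum_ne_top.mpr fun p hp => ?_
    have hmin : p.asIdeal ∈ I.minimalPrimes := by simpa [hs] using hp
    simp only [term]
    split_ifs
    · exact length_localizedModule_quotient_ne_top hmin
    · exact ENat.zero_ne_top
  have hsum : mIdeal I = ∑ p ∈ s, c p + mIdeal J := by
    rw [hmI, hmJ, ← Finset.sum_add_distrib]
    exact Finset.sum_congr rfl fun p _ => hadd p
  have hN : Nontrivial N := by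
    obtain ⟨x, hxJ, hxI⟩ := SetLike.exists_of_lt hIJ
    refine ⟨⟨⟨Submodule.Quotient.mk x, ?_⟩, 0, fun h => hxI ?_⟩⟩
    · exact (Submodule.Quotient.mk_eq_zero J).mpr hxJ
    · exact (Submodule.Quotient.mk_eq_zero I).mp (congrArg Subtype.val h)
  obtain ⟨q, hq⟩ := associatedPrimes.nonempty R N
  have hqI : idealHeight q = idealHeight I :=
    heqI q (associatedPrimes.subset_of_injective (Submodule.subtype_injective N) hq)
  have hqprime : q.IsPrime := hq.isPrime
  have hcq : c ⟨q, hqprime⟩ ≠ 0 := by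
    have hloc : Nontrivial (LocalizedModule q.primeCompl N) := by
      by_contra hsub
      rw [not_nontrivial_iff_subsingleton] at hsub
      exact not_isAssociatedPrime_of_subsingleton
        (Module.associatedPrimes.mem_associatedPrimes_atPrime_of_mem_associatedPrimes hq)
    simp only [c, if_pos hqI]
    exact Module.length_pos.ne'
  have hcsum : ∑ p ∈ s, c p ≠ 0 := by
    intro h
    by_cases hqs : (⟨q, hqprime⟩ : PrimeSpectrum R) ∈ s
    · exact hcq (Finset.sum_eq_zero_iff.mp h _ hqs)
    · exact hcq (add_eq_zero.mp ((hadd _).symm.trans (hzero _ hqs))).1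
  have hJfin : mIdeal J ≠ ⊤ := fun h => hfin (by rw [hsum, h, add_top])
  refine ⟨?_, hfin⟩
  rw [hsum]
  exact ENat.lt_add_left hJfin (pos_iff_ne_zero.mpr hcsum)

/-- Strict decrease of the multiplicity `m(·)` along strict inclusions of equidimensional
ideals of the same height (from the proof of Lemma `LemmeProp13` of the paper). -/
theorem multiplicity_strict_decrease
    {k : Type*} [Field k] (n : ℕ)
    (I J : Ideal (MvPolynomial (Fin 2 ⊕ Fin (n + 1)) k))
    (hIJ : I < J) (hJ : J ≠ ⊤)
    (hht : idealHeight I = idealHeight J)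
    (heqI : IsEquidimensional I) (heqJ : IsEquidimensional J) :
    mIdeal J < mIdeal I ∧ mIdeal I ≠ ⊤ :=
  mIdeal_lt_mIdeal_and_ne_top hIJ hht heqI
end
end
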